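/- Let n ≥ 2 be a natural number, a ≥ 0, and let ε, C be positive real numbers. Let h : ℝ → ℝ be continuous with h(s) > 0 for all s ≥ ε, and suppose h is integrable on [ε, ∞) with C · ∫_ε^∞ h(s) ds > 2a + (n−1)/ε. Then there do not exist functions m, φ : ℝ → ℝ such that φ is differentiable on [ε, ∞) with φ'(t) ≤ −m(t)²/(n−1) − C·h(t) for all t ≥ ε, φ(t) ≥ −a for all t ≥ ε, and φ(ε) ≤ (n−1)/ε + a. -/

import Mathlib

open MeasureTheory Set

/-!
Discarding the square in the Riccati inequality leaves `φ' ≤ -C h`, so `φ` drops by at least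
`C ∫ h` along the ray. The two-sided bounds on `φ` allow a total drop of at most
`2a + (n - 1)/ε`, which is too small.
-/

open Filter

theorem sub_le_integral_Ioi_of_hasDeriv_right_of_le {f f' g : ℝ → ℝ} {a c : ℝ}
    (hcont : ContinuousOn f (Ici a))
    (hderiv : ∀ x ∈ Ioi a, HasDerivWithinAt f (f' x) (Ioi x) x)
    (hint : IntegrableOn g (Ioi a)) (hle : ∀ x ∈ Ioi a, f' x ≤ g x)
    (hc : ∃ᶠ x in atTop, c ≤ f x) :
    c - f a ≤ ∫ x in Ioi a, g x := by
  have increment_le : ∀ b, a ≤ b → f b - f a ≤ ∫ x in a..b, g x := fun b hab ↦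
    intervalIntegral.sub_le_integral_of_hasDeriv_right_of_le hab
      (hcont.mono Icc_subset_Ici_self) (fun x hx ↦ hderiv x hx.1)
      ((Iff.mpr integrableOn_Ici_iff_integrableOn_Ioi hint).mono_set Icc_subset_Ici_self)
      (fun x hx ↦ hle x hx.1)
  have frequently_le : ∃ᶠ b in atTop, c - f a ≤ ∫ x in a..b, g x :=
    (hc.and_eventually (eventually_ge_atTop a)).mono fun b ⟨hcb, hab⟩ ↦
      (sub_le_sub_right hcb _).trans (increment_le b hab)
  exact ge_of_tendsto_of_frequently
    (intervalIntegral_tendsto_integral_Ioi a hint tendsto_id) frequently_le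

theorem stmt_1_general {κ a b ε : ℝ} (hκ : 0 < κ) {h : ℝ → ℝ} (hint : IntegrableOn h (Ici ε))
    (hbig : a + b < ∫ s in Ici ε, h s) :
    ¬ ∃ m φ φ' : ℝ → ℝ,
      (∀ t ∈ Ici ε, HasDerivWithinAt φ (φ' t) (Ici ε) t) ∧
      (∀ t, ε ≤ t → φ' t ≤ -(m t) ^ 2 / κ - h t) ∧
      (∃ᶠ t in atTop, -a ≤ φ t) ∧
      φ ε ≤ b := by
  rintro ⟨m, φ, φ', hderiv, hriccati, hlower, hinit⟩
  have deriv_le : ∀ t ∈ Ioi ε, φ' t ≤ -h t := fun t ht ↦ by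
    have square_nonneg : 0 ≤ m t ^ 2 / κ := by positivity
    linarith [hriccati t (mem_Ioi.mp ht).le, neg_div κ (m t ^ 2)]
  have total_drop_le : -a - φ ε ≤ ∫ t in Ioi ε, -h t :=
    sub_le_integral_Ioi_of_hasDeriv_right_of_le (fun t ht ↦ (hderiv t ht).continuousWithinAt)
      (fun t ht ↦ (hderiv t (Ioi_subset_Ici_self ht)).mono (Ioi_subset_Ici (mem_Ioi.mp ht).le))
      (hint.mono_set Ioi_subset_Ici_self).neg deriv_le hlower
  rw [integral_neg, ← integral_Ici_eq_integral_Ioi] at total_drop_le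
  linarith

/-- Analytic core of Theorem 1.7: the Riccati inequality for the f-mean curvature `φ`,
together with the comparison bounds under `∂_t f ≥ −a`, contradicts
`C · ∫_ε^∞ h > 2a + (n−1)/ε`. -/
theorem stmt_1 (n : ℕ) (hn : 2 ≤ n) (a ε C : ℝ) (ha : 0 ≤ a) (hε : 0 < ε) (hC : 0 < C)
    (h : ℝ → ℝ) (hcont : Continuous h) (hpos : ∀ s, ε ≤ s → 0 < h s)
    (hint : IntegrableOn h (Ici ε))
    (hbig : 2 * a + ((n : ℝ) - 1) / ε < C * ∫ s in Ici ε, h s) :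
    ¬ ∃ m φ φ' : ℝ → ℝ,
      (∀ t ∈ Ici ε, HasDerivWithinAt φ (φ' t) (Ici ε) t) ∧
      (∀ t, ε ≤ t → φ' t ≤ -(m t) ^ 2 / ((n : ℝ) - 1) - C * h t) ∧
      (∀ t, ε ≤ t → -a ≤ φ t) ∧
      φ ε ≤ ((n : ℝ) - 1) / ε + a := by
  rintro ⟨m, φ, φ', hderiv, hriccati, hlower, hinit⟩
  exact stmt_1_general (sub_pos.mpr (Nat.one_lt_cast.mpr hn)) (hint.const_mul C)
    (by rw [integral_const_mul]; linarith)
    ⟨m, φ, φ', hderiv, hriccati, ((eventually_ge_atTop ε).mono hlower).frequently, hinit⟩
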